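/- Let k be a field and let Q be the quiver of type A_n with vertices 1, …, n and arrows ρ_i from i to i+1 for 1 ≤ i ≤ n−1. For each pair 1 ≤ j ≤ l ≤ n, let V[j,l] be the representation with V_i = k for j ≤ i ≤ l and V_i = 0 otherwise, with V_{ρ_i} = id for j ≤ i ≤ l−1 and V_{ρ_i} = 0 otherwise. Then each V[j,l] is indecomposable, any two distinct V[j,l] are non-isomorphic, and every indecomposable representation of Q is isomorphic to exactly one V[j,l]; the dimension vector of V[j,l] corresponds to the positive root α_j + α_{j+1} + … + α_l of the root system of type A_n. -/

import Mathlib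

/-! Statement 13: for the linearly oriented quiver of type A_n, the interval
representations V[j,l] (1 ≤ j ≤ l ≤ n) are exactly the indecomposable representations up
to isomorphism, pairwise non-isomorphic, and the dimension vector of V[j,l] is the
positive root α_j + ⋯ + α_l (written in the basis of simple roots). -/

/-- A finite-dimensional representation of the quiver `(I, E, s, t)` over the field `k`:
a finite-dimensional `k`-vector space `V i` for each vertex `i` and a `k`-linear map
`f e : V (s e) → V (t e)` for each arrow `e`. -/
structure QRep (k : Type) [Field k] (I E : Type) (s t : E → I) where
  V : I → Type
  [acg : ∀ i, AddCommGroup (V i)]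
  [mod : ∀ i, Module k (V i)]
  [fd : ∀ i, FiniteDimensional k (V i)]
  f : ∀ e : E, V (s e) →ₗ[k] V (t e)

attribute [instance] QRep.acg QRep.mod QRep.fd

namespace QRep

variable {k : Type} [Field k] {I E : Type} {s t : E → I}

/-- Isomorphism of quiver representations: a collection of linear equivalences commuting
with the structure maps. -/
def Iso (M N : QRep k I E s t) : Prop :=
  ∃ φ : ∀ i, M.V i ≃ₗ[k] N.V i,
    ∀ (e : E) (v : M.V (s e)), φ (t e) (M.f e v) = N.f e (φ (s e) v)

/-- Direct sum of two quiver representations, defined vertexwise and arrowwise. -/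
def dsum (M N : QRep k I E s t) : QRep k I E s t where
  V i := M.V i × N.V i
  f e := (M.f e).prodMap (N.f e)

/-- The trivial (zero) representation. -/
def zero (k : Type) [Field k] (I E : Type) (s t : E → I) : QRep k I E s t where
  V _ := PUnit
  f _ := 0

/-- A representation is trivial if all its vector spaces are zero. -/
def IsTrivial (M : QRep k I E s t) : Prop := ∀ i, Subsingleton (M.V i)

/-- A representation is indecomposable if it is nontrivial and not isomorphic to a direct
sum of two nontrivial representations. -/
def Indecomposable (M : QRep k I E s t) : Prop :=
  ¬ M.IsTrivial ∧
    ∀ A B : QRep k I E s t, ¬ A.IsTrivial → ¬ B.IsTrivial → ¬ M.Iso (A.dsum B)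

/-- Finite direct sums of quiver representations. -/
def dsumFin : (n : ℕ) → (Fin n → QRep k I E s t) → QRep k I E s t
  | 0, _ => zero k I E s t
  | n + 1, F => (F 0).dsum (dsumFin n fun a => F a.succ)

/-- The dimension vector of a representation. -/
noncomputable def dimVec (M : QRep k I E s t) : I → ℕ := fun i => Module.finrank k (M.V i)

end QRep

/-- The tail map of the linearly oriented `A_n` quiver: the `e`-th arrow goes `e → e + 1`. -/
def srcA (n : ℕ) (e : Fin (n - 1)) : Fin n := ⟨e.1, by have := e.2; omega⟩

/-- The head map of the linearly oriented `A_n` quiver. -/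
def tgtA (n : ℕ) (e : Fin (n - 1)) : Fin n := ⟨e.1 + 1, by have := e.2; omega⟩

/-- The interval representation `V[j,l]` of the linearly oriented `A_n` quiver: `k` at the
vertices `i` with `j ≤ i ≤ l` (zero elsewhere), with identity maps along the arrows inside
the interval (and zero maps elsewhere). -/
def intervalRep (k : Type) [Field k] (n : ℕ) (j l : Fin n) :
    QRep k (Fin n) (Fin (n - 1)) (srcA n) (tgtA n) where
  V i := Fin (if j ≤ i ∧ i ≤ l then 1 else 0) → k
  f _ := (Matrix.of fun _ _ => (1 : k)).mulVecLin

/-!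
Let `M` be an indecomposable representation, `j` the first vertex with `M.V j ≠ 0` and
`0 ≠ v ∈ M.V j`. Push `v` forward along the arrows and let `l` be the last vertex at which its
image is nonzero. The vector `v` then defines a morphism `V[j,l] → M`, and a linear functional on
`M.V l` taking the value `1` on the image of `v` defines a morphism `M → V[j,l]`, because nothing
precedes `j`. The composite is the identity of `V[j,l]`, so `V[j,l]` is a nonzero direct summand of
`M`, hence all of `M`.

Conversely `V[j,l]` is generated by the line at `j`, so its endomorphisms are scalars. A
decomposition would yield a nonscalar projection, so `V[j,l]` is indecomposable.
-/

/-- The splitting `v ↦ (p v, v - q (p v))` of a module along a surjection `p` with linear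
section `q`. -/
def equivProdKerOfLeftInverse {k V W : Type*} [Ring k] [AddCommGroup V] [Module k V]
    [AddCommGroup W] [Module k W] {p : V →ₗ[k] W} {q : W →ₗ[k] V}
    (h : Function.LeftInverse p q) : V ≃ₗ[k] W × LinearMap.ker p :=
  LinearEquiv.ofLinearMap
    (p.prod ((LinearMap.id - q ∘ₗ p).codRestrict (LinearMap.ker p) fun v => by simp [h (p v)]))
    (q.coprod (LinearMap.ker p).subtype)
    (by ext <;> simp [h _])
    (by ext; simp)

namespace QRep

section Quiver

variable {k : Type} [Field k] {I E : Type} {s t : E → I} {M N : QRep k I E s t}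

/-- A morphism of quiver representations: a family of linear maps intertwining the structure
maps. -/
structure Hom (M N : QRep k I E s t) where
  app : ∀ i, M.V i →ₗ[k] N.V i
  comm : ∀ e, app (t e) ∘ₗ M.f e = N.f e ∘ₗ app (s e)

theorem Hom.app_f (g : Hom M N) (e : E) (v : M.V (s e)) :
    g.app (t e) (M.f e v) = N.f e (g.app (s e) v) :=
  LinearMap.congr_fun (g.comm e) v

/-- The kernel of a morphism, as a subrepresentation of its source. -/
def Hom.ker (g : Hom M N) : QRep k I E s t where
  V i := LinearMap.ker (g.app i)
  f e := (M.f e).restrict fun v hv => by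
    rw [LinearMap.mem_ker] at hv ⊢
    rw [g.app_f, hv, map_zero]

theorem Hom.iso_of_bijective (g : Hom M N) (hg : ∀ i, Function.Bijective (g.app i)) : M.Iso N :=
  ⟨fun i => LinearEquiv.ofBijective (g.app i) (hg i), g.app_f⟩

theorem Iso.dimVec_eq (h : M.Iso N) : M.dimVec = N.dimVec := by
  obtain ⟨φ, -⟩ := h
  exact funext fun i => (φ i).finrank_eq

theorem not_isTrivial_iff : ¬ M.IsTrivial ↔ ∃ i, Nontrivial (M.V i) := by
  simp only [IsTrivial, not_forall, not_subsingleton_iff_nontrivial]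

section Retract

variable {ι : Hom N M} {π : Hom M N}

theorem Hom.iso_dsum_ker_of_leftInverse
    (h : ∀ i, Function.LeftInverse (π.app i) (ι.app i)) : M.Iso (N.dsum π.ker) := by
  refine ⟨fun i => equivProdKerOfLeftInverse (h i), fun e v => ?_⟩
  refine Prod.ext (π.app_f e v) (Subtype.ext ?_)
  change M.f e v - ι.app (t e) (π.app (t e) (M.f e v)) = M.f e (v - ι.app (s e) (π.app (s e) v))
  rw [π.app_f, ι.app_f, map_sub]

theorem Indecomposable.iso_of_leftInverse (hM : M.Indecomposable) (hN : ¬ N.IsTrivial)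
    (h : ∀ i, Function.LeftInverse (π.app i) (ι.app i)) : M.Iso N := by
  have ker_trivial : π.ker.IsTrivial := by
    by_contra hker
    exact hM.2 N π.ker hN hker (Hom.iso_dsum_ker_of_leftInverse h)
  refine π.iso_of_bijective fun i => ⟨?_, (h i).surjective⟩
  exact LinearMap.ker_eq_bot.1 (Submodule.subsingleton_iff_eq_bot.1 (ker_trivial i))

end Retract

theorem exists_hom_projection_of_iso_dsum {A B : QRep k I E s t} (hA : ¬ A.IsTrivial)
    (hB : ¬ B.IsTrivial) (h : M.Iso (A.dsum B)) :
    ∃ g : Hom M M, (∃ i, ∃ x ≠ 0, g.app i x = x) ∧ ∃ i, ∃ y ≠ 0, g.app i y = 0 := by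
  obtain ⟨φ, hφ⟩ := h
  obtain ⟨a, _⟩ := not_isTrivial_iff.1 hA
  obtain ⟨b, _⟩ := not_isTrivial_iff.1 hB
  obtain ⟨x, hx⟩ := exists_ne (0 : A.V a)
  obtain ⟨y, hy⟩ := exists_ne (0 : B.V b)
  let p (i : I) : (A.dsum B).V i →ₗ[k] (A.dsum B).V i :=
    LinearMap.inl k (A.V i) (B.V i) ∘ₗ LinearMap.fst k (A.V i) (B.V i)
  have p_comm (e : E) (z : (A.dsum B).V (s e)) :
      p (t e) ((A.dsum B).f e z) = (A.dsum B).f e (p (s e) z) :=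
    Prod.ext rfl (map_zero (B.f e)).symm
  have φ_symm_ne_zero {i : I} {z : (A.dsum B).V i} (hz : z ≠ 0) : (φ i).symm z ≠ 0 :=
    (LinearEquiv.map_ne_zero_iff _).2 hz
  refine ⟨⟨fun i => (φ i).symm.toLinearMap ∘ₗ p i ∘ₗ (φ i).toLinearMap, fun e => ?_⟩,
    ⟨a, (φ a).symm (x, 0), φ_symm_ne_zero fun h0 => hx (congrArg Prod.fst h0), ?_⟩,
    ⟨b, (φ b).symm (0, y), φ_symm_ne_zero fun h0 => hy (congrArg Prod.snd h0), ?_⟩⟩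
  · ext v
    apply (φ (t e)).injective
    simp [hφ, p_comm]
  · exact congrArg ((φ a).symm ∘ p a) ((φ a).apply_symm_apply (x, 0))
  · exact (congrArg ((φ b).symm ∘ p b) ((φ b).apply_symm_apply (0, y))).trans (map_zero _)

theorem indecomposable_of_forall_end_smul (hM : ¬ M.IsTrivial)
    (hend : ∀ g : Hom M M, ∃ c : k, ∀ i v, g.app i v = c • v) : M.Indecomposable := by
  refine ⟨hM, fun A B hA hB hiso => ?_⟩
  obtain ⟨g, ⟨a, x, hx, hgx⟩, b, y, hy, hgy⟩ := exists_hom_projection_of_iso_dsum hA hB hiso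
  obtain ⟨c, hc⟩ := hend g
  have c_eq_zero : c = 0 := (smul_eq_zero.1 ((hc b y).symm.trans hgy)).resolve_right hy
  exact hx (by rw [← hgx, hc, c_eq_zero, zero_smul])

end Quiver

section LinearQuiver

variable {k : Type} [Field k] {n : ℕ}

theorem srcA_lt_tgtA (e : Fin (n - 1)) : srcA n e < tgtA n e :=
  Nat.lt_succ_self e.1

theorem le_srcA_iff_lt_tgtA {i : Fin n} {e : Fin (n - 1)} : i ≤ srcA n e ↔ i < tgtA n e :=
  Nat.lt_succ_iff.symm

theorem arrow_induction {P : Fin n → Prop} (zero : ∀ h : 0 < n, P ⟨0, h⟩)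
    (arrow : ∀ e, P (srcA n e) → P (tgtA n e)) : ∀ i, P i
  | ⟨0, h⟩ => zero h
  | ⟨r + 1, h⟩ => arrow ⟨r, by omega⟩ (arrow_induction zero arrow ⟨r, by omega⟩)

theorem le_induction_arrow {i : Fin n} {P : ∀ i', i ≤ i' → Prop} (self : P i le_rfl)
    (arrow : ∀ e (h : i ≤ srcA n e), P (srcA n e) h →
      P (tgtA n e) (h.trans (srcA_lt_tgtA e).le)) (i' : Fin n) (h : i ≤ i') : P i' h := by
  induction i' using arrow_induction with
  | zero =>
    obtain rfl := le_antisymm h (Nat.zero_le _)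
    exact self
  | arrow e ih =>
    rcases h.eq_or_lt with rfl | hlt
    · exact self
    · have hle : i ≤ srcA n e := le_srcA_iff_lt_tgtA.2 hlt
      exact arrow e hle (ih hle)

variable {M N : QRep k (Fin n) (Fin (n - 1)) (srcA n) (tgtA n)} {i i' i'' : Fin n}

/-- The composite `M.V i → M.V i'` of the structure maps along the path from `i` to `i'`. It is
extended by `0` to the pairs with `i' < i`: the `Pi.single` term is the identity if `i' = i` and
zero otherwise. -/
def transport (M : QRep k (Fin n) (Fin (n - 1)) (srcA n) (tgtA n)) (i : Fin n) :
    (i' : Fin n) → M.V i →ₗ[k] M.V i'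
  | ⟨0, h⟩ => Pi.single (M := fun r => M.V i →ₗ[k] M.V r) i LinearMap.id ⟨0, h⟩
  | ⟨r + 1, h⟩ => Pi.single (M := fun r => M.V i →ₗ[k] M.V r) i LinearMap.id ⟨r + 1, h⟩ +
      (M.f ⟨r, by omega⟩ ∘ₗ M.transport i ⟨r, by omega⟩ : M.V i →ₗ[k] M.V ⟨r + 1, h⟩)

theorem transport_tgtA_eq_single_add (e : Fin (n - 1)) :
    M.transport i (tgtA n e) =
      Pi.single (M := fun r => M.V i →ₗ[k] M.V r) i LinearMap.id (tgtA n e) +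
        M.f e ∘ₗ M.transport i (srcA n e) :=
  transport.eq_2 M i e.1 _

theorem transport_eq_single_of_le (h : i' ≤ i) :
    M.transport i i' = Pi.single (M := fun r => M.V i →ₗ[k] M.V r) i LinearMap.id i' := by
  induction i' using arrow_induction with
  | zero => rw [transport]
  | arrow e ih =>
    have src_lt : srcA n e < i := (srcA_lt_tgtA e).trans_le h
    rw [transport_tgtA_eq_single_add, ih src_lt.le, Pi.single_eq_of_ne src_lt.ne,
      LinearMap.comp_zero, add_zero]

theorem transport_of_lt (h : i' < i) : M.transport i i' = 0 := by
  rw [transport_eq_single_of_le h.le, Pi.single_eq_of_ne h.ne]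

theorem transport_self (i : Fin n) : M.transport i i = LinearMap.id := by
  rw [transport_eq_single_of_le le_rfl, Pi.single_eq_same]

theorem transport_tgtA {e : Fin (n - 1)} (h : i ≤ srcA n e) :
    M.transport i (tgtA n e) = M.f e ∘ₗ M.transport i (srcA n e) := by
  have tgt_ne : tgtA n e ≠ i := (le_srcA_iff_lt_tgtA.1 h).ne'
  rw [transport_tgtA_eq_single_add, Pi.single_eq_of_ne tgt_ne, zero_add]

theorem transport_comp_transport (h : i ≤ i') (h' : i' ≤ i'') :
    M.transport i' i'' ∘ₗ M.transport i i' = M.transport i i'' := by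
  induction i'', h' using le_induction_arrow with
  | self => rw [transport_self, LinearMap.id_comp]
  | arrow e he ih =>
    rw [transport_tgtA he, transport_tgtA (h.trans he), LinearMap.comp_assoc, ih]

theorem transport_srcA {e : Fin (n - 1)} (h : tgtA n e ≤ i) :
    M.transport (srcA n e) i = M.transport (tgtA n e) i ∘ₗ M.f e := by
  rw [← transport_comp_transport (srcA_lt_tgtA e).le h, transport_tgtA le_rfl, transport_self,
    LinearMap.comp_id]

theorem Hom.app_transport (g : Hom M N) (h : i ≤ i') (v : M.V i) :
    g.app i' (M.transport i i' v) = N.transport i i' (g.app i v) := by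
  induction i', h using le_induction_arrow with
  | self => simp only [transport_self, LinearMap.id_apply]
  | arrow e he ih => simp only [transport_tgtA he, LinearMap.comp_apply, g.app_f, ih]

theorem indecomposable_of_surjective_transport (hi : Module.finrank k (M.V i) = 1)
    (hsurj : ∀ i', Function.Surjective (M.transport i i')) : M.Indecomposable := by
  refine indecomposable_of_forall_end_smul
    (not_isTrivial_iff.2 ⟨i, Module.nontrivial_of_finrank_pos (hi ▸ one_pos)⟩) fun g => ?_
  obtain ⟨c, hc, -⟩ := (g.app i).existsUnique_eq_smul_id_of_finrank_eq_one hi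
  refine ⟨c, fun i' w => ?_⟩
  obtain ⟨v, rfl⟩ := hsurj i' w
  rcases lt_or_ge i' i with hlt | hle
  · simp only [transport_of_lt hlt, LinearMap.zero_apply, map_zero, smul_zero]
  · rw [g.app_transport hle, hc, LinearMap.smul_apply, LinearMap.id_apply, map_smul]

end LinearQuiver

end QRep

namespace intervalRep

open QRep

variable {k : Type} [Field k] {n : ℕ} {j l j' l' : Fin n}

theorem dimVec_apply (i : Fin n) :
    (intervalRep k n j l).dimVec i = if j ≤ i ∧ i ≤ l then 1 else 0 :=
  Module.finrank_fin_fun k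

theorem eq_and_eq_of_dimVec_eq (hjl : j ≤ l)
    (h : (intervalRep k n j l).dimVec = (intervalRep k n j' l').dimVec) : j = j' ∧ l = l' := by
  refine (Set.Icc_eq_Icc_iff hjl).1 (Set.ext fun i => ?_)
  have hi := congrFun h i
  rw [dimVec_apply, dimVec_apply] at hi
  rw [Set.mem_Icc, Set.mem_Icc]
  split_ifs at hi <;> tauto

theorem subsingleton_V {i : Fin n} (hi : i ∉ Set.Icc j l) :
    Subsingleton ((intervalRep k n j l).V i) :=
  Module.finrank_zero_iff.1 ((dimVec_apply i).trans (if_neg hi))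

/-- The map `k → V[j,l]_i` with all coordinates the identity: an isomorphism if `j ≤ i ≤ l`, and
zero otherwise. -/
def ofScalar (j l i : Fin n) : k →ₗ[k] (intervalRep k n j l).V i :=
  LinearMap.pi fun _ => LinearMap.id

/-- The sum of the coordinates `V[j,l]_i → k`, which is the inverse of `ofScalar` if `j ≤ i ≤ l`,
and zero otherwise. -/
def coeff (j l i : Fin n) : (intervalRep k n j l).V i →ₗ[k] k :=
  Fintype.linearCombination k fun _ => 1

theorem f_eq_ofScalar_comp_coeff (e : Fin (n - 1)) :
    (intervalRep k n j l).f e = ofScalar j l (tgtA n e) ∘ₗ coeff j l (srcA n e) := by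
  refine LinearMap.ext fun v => funext fun _ => ?_
  exact dotProduct_comm (fun _ => (1 : k)) v

theorem coeff_ofScalar {i : Fin n} (hi : i ∈ Set.Icc j l) (c : k) :
    coeff j l i (ofScalar j l i c) = c := by
  have card_eq_one : (if j ≤ i ∧ i ≤ l then 1 else 0) = 1 := if_pos hi
  change Fintype.linearCombination k (fun _ => (1 : k)) (fun _ => c) = c
  simp [Fintype.linearCombination_apply, card_eq_one]

theorem ofScalar_coeff {i : Fin n} (x : (intervalRep k n j l).V i) :
    ofScalar j l i (coeff j l i x) = x := by
  have : Subsingleton (Fin (if j ≤ i ∧ i ≤ l then 1 else 0)) := by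
    split_ifs <;> infer_instance
  exact funext fun a => (Fintype.sum_subsingleton _ a).trans (mul_one (x a))

theorem surjective_f {e : Fin (n - 1)} (he : j ≤ srcA n e) :
    Function.Surjective ((intervalRep k n j l).f e) := by
  by_cases ht : tgtA n e ∈ Set.Icc j l
  · have hs : srcA n e ∈ Set.Icc j l := ⟨he, (srcA_lt_tgtA e).le.trans ht.2⟩
    rw [f_eq_ofScalar_comp_coeff]
    exact (Function.LeftInverse.surjective ofScalar_coeff).comp
      (Function.LeftInverse.surjective (coeff_ofScalar hs))
  · have := subsingleton_V (k := k) ht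
    exact Function.surjective_to_subsingleton _

theorem surjective_transport (j l i : Fin n) :
    Function.Surjective ((intervalRep k n j l).transport j i) := by
  rcases lt_or_ge i j with hij | hji
  · have := subsingleton_V (k := k) (l := l) fun hi : i ∈ Set.Icc j l => hij.not_ge hi.1
    exact Function.surjective_to_subsingleton _
  · induction i, hji using le_induction_arrow with
    | self =>
      rw [transport_self]
      exact Function.surjective_id
    | arrow e he ih =>
      rw [transport_tgtA he]
      exact (surjective_f he).comp ih

protected theorem indecomposable (hjl : j ≤ l) : (intervalRep k n j l).Indecomposable :=
  indecomposable_of_surjective_transport ((dimVec_apply j).trans (if_pos ⟨le_rfl, hjl⟩))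
    (surjective_transport j l)

variable {M : QRep k (Fin n) (Fin (n - 1)) (srcA n) (tgtA n)}

/-- The morphism `V[j,l] → M` sending the generator at `j` to `v`, for a vector `v` that dies
beyond `l`. -/
def homOfVector (v : M.V j) (hv : ∀ i, l < i → M.transport j i v = 0) :
    Hom (intervalRep k n j l) M where
  app i := LinearMap.toSpanSingleton k (M.V i) (M.transport j i v) ∘ₗ coeff j l i
  comm e := by
    ext x
    by_cases hs : srcA n e ∈ Set.Icc j l
    · rw [f_eq_ofScalar_comp_coeff]
      by_cases ht : tgtA n e ∈ Set.Icc j l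
      · simp [coeff_ofScalar ht, transport_tgtA hs.1]
      · have hlt : l < tgtA n e :=
          not_le.1 fun h => ht ⟨hs.1.trans (srcA_lt_tgtA e).le, h⟩
        have image_eq_zero : M.f e (M.transport j (srcA n e) v) = 0 := by
          rw [← LinearMap.comp_apply, ← transport_tgtA hs.1, hv _ hlt]
        simp [hv _ hlt, image_eq_zero]
    · have := subsingleton_V (k := k) hs
      simp only [Subsingleton.elim x 0, map_zero]

/-- The morphism `M → V[j,l]` given at `l` by `ξ`, for a functional `ξ` on `M.V l` that vanishes
on everything coming from before `j`. -/
def homOfFunctional (ξ : M.V l →ₗ[k] k) (hξ : ∀ i, i < j → ξ ∘ₗ M.transport i l = 0) :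
    Hom M (intervalRep k n j l) where
  app i := ofScalar j l i ∘ₗ ξ ∘ₗ M.transport i l
  comm e := by
    by_cases ht : tgtA n e ∈ Set.Icc j l
    · rw [f_eq_ofScalar_comp_coeff, LinearMap.comp_assoc, LinearMap.comp_assoc,
        ← transport_srcA ht.2]
      by_cases hs : srcA n e ∈ Set.Icc j l
      · ext x
        simp [coeff_ofScalar hs]
      · have hlt : srcA n e < j :=
          not_le.1 fun h => hs ⟨h, (srcA_lt_tgtA e).le.trans ht.2⟩
        simp only [hξ _ hlt, LinearMap.comp_zero]
    · have := subsingleton_V (k := k) ht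
      exact LinearMap.ext fun x => Subsingleton.elim _ _

theorem homOfFunctional_homOfVector {v : M.V j} (hv : ∀ i, l < i → M.transport j i v = 0)
    {ξ : M.V l →ₗ[k] k} (hξ : ∀ i, i < j → ξ ∘ₗ M.transport i l = 0) (i : Fin n)
    (x : (intervalRep k n j l).V i) :
    (homOfFunctional ξ hξ).app i ((homOfVector v hv).app i x) = ξ (M.transport j l v) • x := by
  by_cases hi : i ∈ Set.Icc j l
  · have composite : M.transport i l (M.transport j i v) = M.transport j l v := by
      rw [← LinearMap.comp_apply, transport_comp_transport hi.1 hi.2]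
    calc
      _ = ofScalar j l i (ξ (M.transport i l (coeff j l i x • M.transport j i v))) := rfl
      _ = ξ (M.transport j l v) • ofScalar j l i (coeff j l i x) := by
        rw [map_smul, composite, map_smul, smul_eq_mul, mul_comm, ← smul_eq_mul, map_smul]
      _ = ξ (M.transport j l v) • x := by rw [ofScalar_coeff]
  · have := subsingleton_V (k := k) hi
    exact Subsingleton.elim _ _

end intervalRep

namespace QRep

variable {k : Type} [Field k] {n : ℕ} {M : QRep k (Fin n) (Fin (n - 1)) (srcA n) (tgtA n)}

theorem exists_first_nontrivial (hM : ¬ M.IsTrivial) :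
    ∃ j, Nontrivial (M.V j) ∧ ∀ i < j, Subsingleton (M.V i) := by
  obtain ⟨j, hj⟩ := (Set.toFinite {i | Nontrivial (M.V i)}).exists_minimal
    (not_isTrivial_iff.1 hM)
  exact ⟨j, hj.prop, fun i hij => not_nontrivial_iff_subsingleton.1 (hj.not_prop_of_lt hij)⟩

theorem exists_last_transport_ne_zero {j : Fin n} {v : M.V j} (hv : v ≠ 0) :
    ∃ l, j ≤ l ∧ M.transport j l v ≠ 0 ∧ ∀ i, l < i → M.transport j i v = 0 := by
  have hj : M.transport j j v ≠ 0 := by rwa [transport_self]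
  obtain ⟨l, hjl, hl⟩ := (Set.toFinite {i | M.transport j i v ≠ 0}).exists_le_maximal hj
  exact ⟨l, hjl, hl.prop, fun i hi => not_not.1 (hl.not_prop_of_gt hi)⟩

theorem Indecomposable.exists_iso_intervalRep (hM : M.Indecomposable) :
    ∃ j l : Fin n, j ≤ l ∧ M.Iso (intervalRep k n j l) := by
  obtain ⟨j, _, subsingleton_before⟩ := exists_first_nontrivial hM.1
  obtain ⟨v, hv⟩ := exists_ne (0 : M.V j)
  obtain ⟨l, hjl, hl, zero_after⟩ := exists_last_transport_ne_zero hv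
  obtain ⟨ξ, hξ⟩ := Module.Projective.exists_dual_eq_one k hl
  have vanishes_before (i : Fin n) (hi : i < j) : ξ ∘ₗ M.transport i l = 0 := by
    have := subsingleton_before i hi
    exact Subsingleton.elim _ _
  refine ⟨j, l, hjl, hM.iso_of_leftInverse (intervalRep.indecomposable hjl).1
    (ι := intervalRep.homOfVector v zero_after)
    (π := intervalRep.homOfFunctional ξ vanishes_before) fun i x => ?_⟩
  rw [intervalRep.homOfFunctional_homOfVector, hξ, one_smul]

end QRep

open QRep in
theorem stmt13 (k : Type) [Field k] (n : ℕ) (hn : 1 ≤ n) :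
    -- each V[j,l] is indecomposable
    (∀ j l : Fin n, j ≤ l → (intervalRep k n j l).Indecomposable) ∧
    -- distinct intervals give non-isomorphic representations
    (∀ j l j' l' : Fin n, j ≤ l → j' ≤ l' →
      (intervalRep k n j l).Iso (intervalRep k n j' l') → j = j' ∧ l = l') ∧
    -- every indecomposable representation is isomorphic to exactly one V[j,l]
    (∀ M : QRep k (Fin n) (Fin (n - 1)) (srcA n) (tgtA n), M.Indecomposable →
      ∃! p : Fin n × Fin n, p.1 ≤ p.2 ∧ M.Iso (intervalRep k n p.1 p.2)) ∧
    -- the dimension vector of V[j,l] is the positive root α_j + ⋯ + α_l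
    (∀ j l : Fin n, j ≤ l → ∀ i : Fin n,
      dimVec (intervalRep k n j l) i = if j ≤ i ∧ i ≤ l then 1 else 0) := by
  refine ⟨fun j l hjl => intervalRep.indecomposable hjl,
    fun j l j' l' hjl _ hiso => intervalRep.eq_and_eq_of_dimVec_eq hjl hiso.dimVec_eq,
    fun M hM => ?_, fun j l _ i => intervalRep.dimVec_apply i⟩
  obtain ⟨j, l, hjl, hiso⟩ := hM.exists_iso_intervalRep
  refine ⟨(j, l), ⟨hjl, hiso⟩, fun ⟨j', l'⟩ ⟨hjl', hiso'⟩ => Prod.ext_iff.2 ?_⟩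
  exact intervalRep.eq_and_eq_of_dimVec_eq hjl' (hiso'.dimVec_eq.symm.trans hiso.dimVec_eq)
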